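/- For all n ≥ 3 and all natural numbers u, v, the number of π ∈ NC(n,3) with skip(π) = u and leap(π) = v equals the number of π ∈ NC(n,3) with skip(π) = v and leap(π) = u. (Combinatorial symmetry N_{n,3}(q,t) = N_{n,3}(t,q) of the q,t-Narayana polynomial interpreted via the pair (skip, leap).) -/

import Mathlib

namespace QtN

/-! ### Lattice paths and parallelogram polyominoes -/

/-- A step of a lattice path: east or north. -/
inductive Step : Type
  | E : Step
  | N : Step
  deriving DecidableEq, Repr

/-- Number of east steps of a path. -/
def countE (w : List Step) : ℕ := w.count Step.E

/-- Number of north steps of a path. -/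
def countN (w : List Step) : ℕ := w.count Step.N

/-- Endpoint of a path started at the origin. -/
def pathPos (w : List Step) : ℕ × ℕ := (countE w, countN w)

/-- The set of lattice points visited by a path started at the origin. -/
def pathPts (w : List Step) : Finset (ℕ × ℕ) :=
  ((List.range (w.length + 1)).map (fun i => pathPos (w.take i))).toFinset

/-- `colHeightsAux w h`: for each east step of `w` (in order), the number of north
steps preceding it, starting with `h` north steps already performed. -/
def colHeightsAux : List Step → ℕ → List ℕ
  | [], _ => []
  | Step.E :: r, h => h :: colHeightsAux r h
  | Step.N :: r, h => colHeightsAux r (h + 1)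

/-- Height at which the path `w` crosses the vertical strip `i ≤ x ≤ i + 1`. -/
def colHeight (w : List Step) (i : ℕ) : ℕ := (colHeightsAux w 0).getD i 0

/-- A parallelogram polyomino of size `m × n`: a pair of monotone lattice paths from
`(0,0)` to `(m,n)` (east/north steps), the upper path staying weakly above the lower
path, and the two paths meeting only at `(0,0)` and `(m,n)`. -/
structure Polyomino (m n : ℕ) : Type where
  lower : List Step
  upper : List Step
  lowerE : countE lower = m
  lowerN : countN lower = n
  upperE : countE upper = m
  upperN : countN upper = n
  above : ∀ i < m, colHeight lower i ≤ colHeight upper i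
  meet : pathPts upper ∩ pathPts lower = {(0, 0), (m, n)}

/-- The area statistic: number of unit squares between the two paths,
minus `(m + n - 1)`. -/
def area {m n : ℕ} (P : Polyomino m n) : ℕ :=
  (∑ i ∈ Finset.range m, (colHeight P.upper i - colHeight P.lower i)) - (m + n - 1)

/-- Where an eastward run at height `y`, starting at `x`, first hits the lower path. -/
def eastTarget (hL : ℕ → ℕ) (m x y : ℕ) : ℕ :=
  ((List.range m).filter (fun i => decide (x ≤ i ∧ y ≤ hL i))).headD m

/-- Total bounce contribution: from state `(x, y)` just after the `j`-th east-to-north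
turn (counting the turns made so far), alternately go north until hitting the upper
path and east until hitting the lower path, each step contributing the number of
east-to-north turns preceding it. -/
def bounceAux (hU hL : ℕ → ℕ) (m n : ℕ) : ℕ → ℕ → ℕ → ℕ → ℕ
  | 0, _, _, _ => 0
  | fuel + 1, x, y, j =>
    if x = m ∧ y = n then 0
    else
      let y' := hU (x - 1)
      let x' := if y' = n then m else eastTarget hL m x y'
      (j + 1) * ((y' - y) + (x' - x)) + bounceAux hU hL m n fuel x' y' (j + 1)

/-- The bounce statistic of a parallelogram polyomino: the bounce path starts with a
single east step (contributing `0`) and then alternates north runs (to the ceiling)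
and east runs (to the floor); each step contributes the number of east-to-north turns
preceding it; finally `(m + n - 1)` is subtracted. -/
def bounce {m n : ℕ} (P : Polyomino m n) : ℕ :=
  bounceAux (colHeight P.upper) (colHeight P.lower) m n (m + n + 2) 1 0 0 - (m + n - 1)

/-! ### Set partitions and noncrossing partitions -/

/-- Maximum of a finite set of naturals (`0` for the empty set). -/
def fmax (β : Finset ℕ) : ℕ := β.sup id

/-- Minimum of a finite set of naturals (`0` for the empty set). -/
def fmin (β : Finset ℕ) : ℕ := if h : β.Nonempty then β.min' h else 0

/-- A set partition of `{1, …, n}`, given by its finite set of blocks. -/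
structure SetPartition (n : ℕ) : Type where
  blocks : Finset (Finset ℕ)
  not_empty_mem : ∅ ∉ blocks
  cover : ∀ i : ℕ, i ∈ Finset.Icc 1 n ↔ ∃ β ∈ blocks, i ∈ β
  disjoint : ∀ β ∈ blocks, ∀ γ ∈ blocks, β ≠ γ → Disjoint β γ

/-- A family of blocks is noncrossing if there are no `a < b < c < d` with
`a, c` in one block and `b, d` in a different block. -/
def IsNoncrossing (bs : Finset (Finset ℕ)) : Prop :=
  ∀ a b c d : ℕ, a < b → b < c → c < d →
    ∀ β ∈ bs, ∀ γ ∈ bs, a ∈ β → c ∈ β → b ∈ γ → d ∈ γ → β = γ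

/-- `NC n k`: noncrossing partitions of `{1, …, n}` with exactly `n - k + 1` blocks. -/
abbrev NC (n k : ℕ) : Type :=
  {P : SetPartition n // IsNoncrossing P.blocks ∧ P.blocks.card = n - k + 1}

/-- The skip statistic: `∑_{β} (max β - min β - |β| + 1)`. -/
def skip (bs : Finset (Finset ℕ)) : ℕ :=
  ∑ β ∈ bs, ((fmax β + 1 - fmin β) - β.card)

/-- The non-singleton blocks of a partition. -/
def nsBlocks (bs : Finset (Finset ℕ)) : Finset (Finset ℕ) :=
  bs.filter (fun β => 2 ≤ β.card)

/-- The block of `bs` containing `x` (junk if there is not exactly one). -/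
def blockContaining (bs : Finset (Finset ℕ)) (x : ℕ) : Finset ℕ :=
  (bs.filter (fun β => x ∈ β)).sup id

/-- For a noncrossing partition in `NC n 3`, the quadruple `(a, b, c, d)` describing its
non-singleton blocks: for two pair blocks `{a,b}` and `{c,d}` (with `a` the global
minimum) this is `(a, b, c, d)`; for a single triple block `{a, b, c}` (`a < b < c`)
this is `(a, b, b, c)`. -/
def blockQuad (bs : Finset (Finset ℕ)) : ℕ × ℕ × ℕ × ℕ :=
  let A := blockContaining (nsBlocks bs) (fmin ((nsBlocks bs).sup id))
  if (nsBlocks bs).card = 1 then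
    let l := A.sort (· ≤ ·)
    (l.getD 0 0, l.getD 1 0, l.getD 1 0, l.getD 2 0)
  else
    let B := ((nsBlocks bs).erase A).sup id
    (fmin A, fmax A, fmin B, fmax B)

/-- The leap statistic on `NC n 3`: `leap(ab|cd) = c - 2 + max(0, c - b)`,
and `leap({a,b,c}) = b - 2` (the case `b = c`). -/
def leap (bs : Finset (Finset ℕ)) : ℕ :=
  let (_, b, c, _) := blockQuad bs
  (c - 2) + (c - b)

/-- The skew statistic on `NC n 3`: `skew(ab|cd) = c - 2 + a` if `b < c`, else `c - 2`;
`skew({a,b,c}) = b - 2` (the case `b = c`). -/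
def skew (bs : Finset (Finset ℕ)) : ℕ :=
  let (a, b, c, _) := blockQuad bs
  if b < c then c - 2 + a else c - 2

/-- The mag statistic on `NC n 3`: `mag(ab|cd) = a + max(b, c) - 2 - ⌈(b - a)/2⌉`,
and `mag({a,b,c}) = a + b - 2 - ⌈(b - a)/2⌉` (the case `b = c`). -/
def mag (bs : Finset (Finset ℕ)) : ℕ :=
  let (a, b, c, _) := blockQuad bs
  a + max b c - 2 - (b - a + 1) / 2

/-- The area statistic on noncrossing partitions:
`area(π) = ∑_{β, β' ∈ π} #{ i ∈ β' : i < max β < max β' }` (ordered pairs of blocks). -/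
def ncArea (bs : Finset (Finset ℕ)) : ℕ :=
  ∑ β ∈ bs, ∑ γ ∈ bs, (γ.filter (fun i => i < fmax β ∧ fmax β < fmax γ)).card

/-- The elements of the non-singleton blocks, listed in increasing order, with
the middle element of a size-3 block listed twice. -/
def nsList (bs : Finset (Finset ℕ)) : List ℕ :=
  let l := ((nsBlocks bs).sup id).sort (· ≤ ·)
  if l.length = 3 then [l.getD 0 0, l.getD 1 0, l.getD 1 0, l.getD 2 0] else l

/-- The multiset of block sizes of a partition. -/
def blockSizes (bs : Finset (Finset ℕ)) : Multiset ℕ := bs.val.map Finset.card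

/-- The image of a partition of `{1, …, n}` under the flip `i ↦ n + 1 - i`. -/
def flipBlocks (n : ℕ) (bs : Finset (Finset ℕ)) : Finset (Finset ℕ) :=
  bs.image (fun β => β.image (fun i => n + 1 - i))

/-! ### The mingarc statistic -/

/-- The gaps `ν_r = m_{r+1} - m_r - 1` between consecutive block minima
`m_1 < ⋯ < m_h` (with `m_{h+1} = n + 1`). -/
def nuList (n : ℕ) (bs : Finset (Finset ℕ)) : List ℕ :=
  let ms := ((bs.image fmin).sort (· ≤ ·)) ++ [n + 1]
  (List.range (bs.image fmin).card).map (fun r => ms.getD (r + 1) 0 - ms.getD r 0 - 1)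

/-- Concatenation of `replicate ν c` over a list of pairs `(c, ν)`. -/
def repeatEach : List (ℕ × ℕ) → List ℕ
  | [] => []
  | p :: r => List.replicate p.2 p.1 ++ repeatEach r

/-- The right endpoints `y_1 ≤ ⋯ ≤ y_{k-1}`: each block maximum `c_r` repeated
`ν_r` times, in increasing order. -/
def ysList (n : ℕ) (bs : Finset (Finset ℕ)) : List ℕ :=
  repeatEach (List.zip ((bs.image fmax).sort (· ≤ ·)) (nuList n bs))

/-- The left endpoints `x_1 < ⋯ < x_{k-1}`: the elements of `{1, …, n}` that are not
block maxima, in increasing order. -/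
def xsList (n : ℕ) (bs : Finset (Finset ℕ)) : List ℕ :=
  ((Finset.Icc 1 n).filter (fun i => i ∉ bs.image fmax)).sort (· ≤ ·)

/-- Greedy left-to-right selection of arcs: keep the first arc, and thereafter keep the
earliest arc whose left endpoint exceeds the right endpoint of the last kept arc. -/
def greedyArcs : List (ℕ × ℕ) → Option ℕ → List (ℕ × ℕ)
  | [], _ => []
  | a :: rest, none => a :: greedyArcs rest (some a.2)
  | a :: rest, some r =>
      if r < a.1 then a :: greedyArcs rest (some a.2) else greedyArcs rest (some r)

/-- The mingarc statistic: the sum of `n - y_i` over the greedily selected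
candidate arcs `[x_i, y_i]`. -/
def mingarc (n : ℕ) (bs : Finset (Finset ℕ)) : ℕ :=
  ((greedyArcs (List.zip (xsList n bs) (ysList n bs)) none).map (fun p => n - p.2)).sum

/-! ### The map η from polyominoes to noncrossing partitions -/

/-- Largest column index `i < m` with `colHeight lower i ≤ j`: the rightmost cell
adjacent to the floor in row `j`. -/
def eFloor {m k : ℕ} (P : Polyomino m k) (j : ℕ) : ℕ :=
  (((List.range m).filter (fun i => decide (colHeight P.lower i ≤ j))).getLastD 0)

/-- Smallest column index `i` with `colHeight upper i ≥ j + 1`: the leftmost cell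
adjacent to the ceiling in row `j` (with default `m - 1`). -/
def fCeil {m k : ℕ} (P : Polyomino m k) (j : ℕ) : ℕ :=
  (((List.range m).filter (fun i => decide (j + 1 ≤ colHeight P.upper i))).headD (m - 1))

/-- The number of cells adjacent to the ceiling in row `j`. -/
def rowCount {m k : ℕ} (P : Polyomino m k) (j : ℕ) : ℕ :=
  fCeil P (j + 1) - fCeil P j + 1

/-- Pick, `cnt` times, the largest label in `{1, …, L}` not used yet. -/
def pickRow : ℕ → ℕ → Finset ℕ → Finset ℕ
  | 0, _, _ => ∅
  | cnt + 1, L, used =>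
      let x := fmax ((Finset.Icc 1 L) \ used)
      insert x (pickRow cnt L (insert x used))

/-- The blocks of `η(P)`: label the cells adjacent to the floor `1, …, n` going bottom
to top, left to right (the label of the floor cell in column `i`, row `j` is
`i + j + 1`, and the labels present in rows `≤ j` are exactly `1, …, eFloor P j + j + 1`);
then going bottom to top, left to right over the cells adjacent to the ceiling, assign
to each the largest unused indexing label occurring in the same row or below; the
blocks are the label sets of the ceiling rows. -/
def etaBlocks {m k : ℕ} (P : Polyomino m k) : Finset (Finset ℕ) :=
  (((List.range k).foldl
      (fun st j =>
        let B := pickRow (rowCount P j) (eFloor P j + j + 1) st.1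
        (st.1 ∪ B, B :: st.2))
      ((∅ : Finset ℕ), ([] : List (Finset ℕ)))).2).toFinset

/-! List the elements of the non-singleton blocks of `π ∈ NC(n,3)` in increasing order as
`x < y < m` (one triple) or `x < y < z < m` (two pairs). The involution fixes the largest element
`m`, translates the others inside `{1, …, m - 1}` so that the distance from `0` to the first of them
and the distance from the last of them to `m` are exchanged, and, for two pairs, also exchanges the
disjoint pattern `xy|zm` with the nested one `xm|yz`. Since `skip` and `leap` of the three patterns
are

* `{x,y,m}`: `m - x - 2` and `y - 2`,
* `xy|zm`: `(y - x - 1) + (m - z - 1)` and `(z - 2) + (z - y)`,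
* `xm|yz`: `(m - x - 1) + (z - y - 1)` and `y - 2`,

this involution exchanges the two statistics. -/

section Extrema

theorem fmin_insert_of_le {s : Finset ℕ} {a : ℕ} (h : ∀ x ∈ s, a ≤ x) :
    fmin (insert a s) = a := by
  rw [fmin, dif_pos (Finset.insert_nonempty a s)]
  refine le_antisymm (Finset.min'_le _ _ (Finset.mem_insert_self a s)) (Finset.le_min' _ _ _ ?_)
  simpa using h

theorem fmin_singleton (a : ℕ) : fmin {a} = a :=
  fmin_insert_of_le (s := ∅) (by simp)

theorem fmin_pair {a b : ℕ} (h : a ≤ b) : fmin {a, b} = a :=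
  fmin_insert_of_le (by simpa using h)

theorem fmax_singleton (a : ℕ) : fmax {a} = a :=
  Finset.sup_singleton

theorem fmax_insert (a : ℕ) (s : Finset ℕ) : fmax (insert a s) = max a (fmax s) :=
  Finset.sup_insert

theorem fmax_pair {a b : ℕ} (h : a ≤ b) : fmax {a, b} = b := by
  rw [fmax_insert, fmax_singleton, max_eq_right h]

end Extrema

section PairsAndTriples

variable {α : Type*} [LinearOrder α]

theorem exists_lt_of_card_eq_two {s : Finset α} (h : s.card = 2) : ∃ a b, a < b ∧ s = {a, b} := by
  refine ⟨s.orderEmbOfFin h 0, s.orderEmbOfFin h 1, by simp, ?_⟩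
  simpa [Fin.univ_succ] using (Finset.image_orderEmbOfFin_univ s h).symm

theorem exists_lt_lt_of_card_eq_three {s : Finset α} (h : s.card = 3) :
    ∃ a b c, a < b ∧ b < c ∧ s = {a, b, c} := by
  refine ⟨s.orderEmbOfFin h 0, s.orderEmbOfFin h 1, s.orderEmbOfFin h 2, by simp, by simp, ?_⟩
  simpa [Fin.univ_succ] using (Finset.image_orderEmbOfFin_univ s h).symm

theorem sort_triple {a b c : α} (hab : a < b) (hbc : b < c) :
    ({a, b, c} : Finset α).sort (· ≤ ·) = [a, b, c] := by
  rw [Finset.sort_insert, Finset.sort_insert, Finset.sort_singleton]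
  all_goals simp [hab, hbc, hab.trans hbc, le_of_lt, ne_of_lt]

theorem card_triple {a b c : α} (hab : a < b) (hbc : b < c) : ({a, b, c} : Finset α).card = 3 :=
  Finset.card_eq_three.2 ⟨a, b, c, hab.ne, (hab.trans hbc).ne, hbc.ne, rfl⟩

end PairsAndTriples

theorem disjoint_pair_pair_iff {α : Type*} [DecidableEq α] {a b c d : α} :
    Disjoint ({a, b} : Finset α) {c, d} ↔ (a ≠ c ∧ a ≠ d) ∧ b ≠ c ∧ b ≠ d := by
  simp only [Finset.disjoint_insert_left, Finset.disjoint_singleton_left, Finset.mem_insert,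
    Finset.mem_singleton, not_or]

theorem eq_singleton_or_eq_pair_of_sum_card_sub_one_eq_two {α : Type*} [DecidableEq α]
    {S : Finset (Finset α)} (h_two : ∀ β ∈ S, 2 ≤ β.card) (h_sum : ∑ β ∈ S, (β.card - 1) = 2) :
    (∃ β, β.card = 3 ∧ S = {β}) ∨ ∃ β γ, β.card = 2 ∧ γ.card = 2 ∧ β ≠ γ ∧ S = {β, γ} := by
  have h_le : S.card ≤ 2 := by
    rw [← h_sum, Finset.card_eq_sum_ones]
    exact Finset.sum_le_sum fun β hβ => Nat.le_sub_one_of_lt (h_two β hβ)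
  have h_ne_zero : S.card ≠ 0 := by
    intro h
    simp [Finset.card_eq_zero.1 h] at h_sum
  rcases (by omega : S.card = 1 ∨ S.card = 2) with h_card | h_card
  · obtain ⟨β, rfl⟩ := Finset.card_eq_one.1 h_card
    rw [Finset.sum_singleton] at h_sum
    exact .inl ⟨β, by omega, rfl⟩
  · obtain ⟨β, γ, h_ne, rfl⟩ := Finset.card_eq_two.1 h_card
    rw [Finset.sum_pair h_ne] at h_sum
    have hβ := h_two β (by simp)
    have hγ := h_two γ (by simp)
    exact .inr ⟨β, γ, by omega, by omega, h_ne, rfl⟩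

section NonsingletonBlocks

variable {n k : ℕ}

/-- The families of pairwise disjoint subsets of `{1, …, n}` with at least two elements each, that
is, the families of non-singleton blocks of set partitions of `{1, …, n}`. -/
structure IsNsFamily (n : ℕ) (S : Finset (Finset ℕ)) : Prop where
  two_le_card : ∀ β ∈ S, 2 ≤ β.card
  subset_Icc : ∀ β ∈ S, β ⊆ Finset.Icc 1 n
  disjoint : ∀ β ∈ S, ∀ γ ∈ S, β ≠ γ → Disjoint β γ

/-- The family `S` together with the singletons of all elements of `{1, …, n}` that it does not
cover: the partition with non-singleton blocks `S`. -/
def addSingletons (n : ℕ) (S : Finset (Finset ℕ)) : Finset (Finset ℕ) :=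
  S ∪ (Finset.Icc 1 n \ S.biUnion id).image fun x => {x}

theorem mem_addSingletons {S : Finset (Finset ℕ)} {β : Finset ℕ} :
    β ∈ addSingletons n S ↔ β ∈ S ∨ ∃ x ∈ Finset.Icc 1 n, (∀ γ ∈ S, x ∉ γ) ∧ β = {x} := by
  simp [addSingletons, and_assoc, eq_comm]

theorem IsNoncrossing.mono {S T : Finset (Finset ℕ)} (hT : IsNoncrossing T) (h : S ⊆ T) :
    IsNoncrossing S :=
  fun a b c d hab hbc hcd β hβ γ hγ => hT a b c d hab hbc hcd β (h hβ) γ (h hγ)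

theorem IsNoncrossing.addSingletons {S : Finset (Finset ℕ)} (h : IsNoncrossing S) :
    IsNoncrossing (addSingletons n S) := by
  intro a b c d hab hbc hcd β hβ γ hγ ha hc hb hd
  rcases mem_addSingletons.1 hβ with hβ | ⟨x, _, _, rfl⟩
  · rcases mem_addSingletons.1 hγ with hγ | ⟨x, _, _, rfl⟩
    · exact h a b c d hab hbc hcd β hβ γ hγ ha hc hb hd
    · rw [Finset.mem_singleton] at hb hd
      omega
  · rw [Finset.mem_singleton] at ha hc
    omega

namespace SetPartition

theorem blocks_injective : Function.Injective (blocks : SetPartition n → Finset (Finset ℕ)) := by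
  rintro ⟨⟩ ⟨⟩ rfl
  rfl

theorem card_pos_of_mem (P : SetPartition n) {β : Finset ℕ} (hβ : β ∈ P.blocks) : 0 < β.card :=
  Finset.card_pos.2 (Finset.nonempty_iff_ne_empty.2 fun h => P.not_empty_mem (h ▸ hβ))

theorem eq_of_mem_of_mem (P : SetPartition n) {β γ : Finset ℕ} (hβ : β ∈ P.blocks)
    (hγ : γ ∈ P.blocks) {x : ℕ} (hxβ : x ∈ β) (hxγ : x ∈ γ) : β = γ := by
  by_contra h
  exact Finset.disjoint_left.1 (P.disjoint β hβ γ hγ h) hxβ hxγ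

theorem mem_nsBlocks_or_eq_singleton (P : SetPartition n) {β : Finset ℕ} (hβ : β ∈ P.blocks) :
    β ∈ nsBlocks P.blocks ∨ ∃ x, β = {x} := by
  rcases eq_or_lt_of_le (Nat.one_le_iff_ne_zero.2 (P.card_pos_of_mem hβ).ne') with h | h
  · exact .inr (Finset.card_eq_one.1 h.symm)
  · exact .inl (Finset.mem_filter.2 ⟨hβ, h⟩)

theorem sum_card_blocks (P : SetPartition n) : ∑ β ∈ P.blocks, β.card = n := by
  have h_union : P.blocks.biUnion id = Finset.Icc 1 n := by
    ext i
    simp only [P.cover i, Finset.mem_biUnion, id]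
  have h_card := Finset.card_biUnion (s := P.blocks) (t := id) P.disjoint
  simpa [h_union] using h_card.symm

theorem sum_nsBlocks_card_sub_one_add_card_blocks (P : SetPartition n) :
    ∑ β ∈ nsBlocks P.blocks, (β.card - 1) + P.blocks.card = n := by
  have h_ns : ∑ β ∈ nsBlocks P.blocks, (β.card - 1) = ∑ β ∈ P.blocks, (β.card - 1) :=
    Finset.sum_filter_of_ne fun β _ h => by omega
  calc ∑ β ∈ nsBlocks P.blocks, (β.card - 1) + P.blocks.card
      = ∑ β ∈ P.blocks, ((β.card - 1) + 1) := by
        rw [h_ns, Finset.card_eq_sum_ones, ← Finset.sum_add_distrib]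
    _ = ∑ β ∈ P.blocks, β.card :=
        Finset.sum_congr rfl fun β hβ => Nat.sub_add_cancel (P.card_pos_of_mem hβ)
    _ = n := P.sum_card_blocks

theorem isNsFamily_nsBlocks (P : SetPartition n) : IsNsFamily n (nsBlocks P.blocks) where
  two_le_card _ hβ := (Finset.mem_filter.1 hβ).2
  subset_Icc _ hβ x hx := (P.cover x).2 ⟨_, (Finset.mem_filter.1 hβ).1, hx⟩
  disjoint _ hβ _ hγ := P.disjoint _ (Finset.mem_filter.1 hβ).1 _ (Finset.mem_filter.1 hγ).1

theorem addSingletons_nsBlocks (P : SetPartition n) :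
    addSingletons n (nsBlocks P.blocks) = P.blocks := by
  ext β
  rw [mem_addSingletons]
  constructor
  · rintro (hβ | ⟨x, hx, hx_ns, rfl⟩)
    · exact (Finset.mem_filter.1 hβ).1
    · obtain ⟨γ, hγ, hxγ⟩ := (P.cover x).1 hx
      rcases P.mem_nsBlocks_or_eq_singleton hγ with h | ⟨y, rfl⟩
      · exact absurd hxγ (hx_ns γ h)
      · rwa [Finset.mem_singleton.1 hxγ]
  · intro hβ
    refine (P.mem_nsBlocks_or_eq_singleton hβ).imp_right ?_
    rintro ⟨x, rfl⟩
    have hx := Finset.mem_singleton_self x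
    refine ⟨x, (P.cover x).2 ⟨_, hβ, hx⟩, fun γ hγ hxγ => ?_, rfl⟩
    obtain ⟨hγ, h_card⟩ := Finset.mem_filter.1 hγ
    rw [← P.eq_of_mem_of_mem hβ hγ hx hxγ, Finset.card_singleton] at h_card
    omega

theorem skip_nsBlocks (P : SetPartition n) : skip (nsBlocks P.blocks) = skip P.blocks := by
  refine Finset.sum_filter_of_ne fun β hβ h_ne => ?_
  rcases P.mem_nsBlocks_or_eq_singleton hβ with h | ⟨x, rfl⟩
  · exact (Finset.mem_filter.1 h).2
  · simp [fmin_singleton, fmax_singleton] at h_ne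

end SetPartition

theorem nsBlocks_eq_self {S : Finset (Finset ℕ)} (h : ∀ β ∈ S, 2 ≤ β.card) : nsBlocks S = S :=
  Finset.filter_true_of_mem h

theorem leap_nsBlocks (bs : Finset (Finset ℕ)) : leap (nsBlocks bs) = leap bs := by
  have h : nsBlocks (nsBlocks bs) = nsBlocks bs :=
    nsBlocks_eq_self fun _ hβ => (Finset.mem_filter.1 hβ).2
  simp only [leap, blockQuad, h]

namespace IsNsFamily

variable {S : Finset (Finset ℕ)}

theorem nsBlocks_addSingletons (h : IsNsFamily n S) : nsBlocks (addSingletons n S) = S := by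
  ext β
  simp only [nsBlocks, Finset.mem_filter, mem_addSingletons]
  constructor
  · rintro ⟨hβ | ⟨x, _, _, rfl⟩, h_card⟩
    · exact hβ
    · simp at h_card
  · exact fun hβ => ⟨.inl hβ, h.two_le_card β hβ⟩

theorem singleton {β : Finset ℕ} (h_card : 2 ≤ β.card) (h_sub : β ⊆ Finset.Icc 1 n) :
    IsNsFamily n {β} where
  two_le_card := by simpa using h_card
  subset_Icc := by simpa using h_sub
  disjoint := by simp

theorem insert {β : Finset ℕ} (h : IsNsFamily n S) (h_card : 2 ≤ β.card)
    (h_sub : β ⊆ Finset.Icc 1 n) (h_disj : ∀ γ ∈ S, Disjoint β γ) :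
    IsNsFamily n (insert β S) where
  two_le_card := by simpa using ⟨h_card, h.two_le_card⟩
  subset_Icc := by simpa using ⟨h_sub, h.subset_Icc⟩
  disjoint := by
    have h_disj_S := h.disjoint
    grind

theorem pair {a b c d : ℕ} (hab : a ≠ b) (hcd : c ≠ d) (hab_sub : {a, b} ⊆ Finset.Icc 1 n)
    (hcd_sub : {c, d} ⊆ Finset.Icc 1 n) (h_disj : Disjoint ({a, b} : Finset ℕ) {c, d}) :
    IsNsFamily n {{a, b}, {c, d}} :=
  (singleton (Finset.card_pair hcd).ge hcd_sub).insert (Finset.card_pair hab).ge hab_sub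
    (by rintro _ hγ; rwa [Finset.mem_singleton.1 hγ])

/-- The set partition of `{1, …, n}` with non-singleton blocks `S`. -/
def toSetPartition (h : IsNsFamily n S) : SetPartition n where
  blocks := addSingletons n S
  not_empty_mem h_mem := by
    rcases mem_addSingletons.1 h_mem with h_mem | ⟨x, _, _, h_eq⟩
    · simpa using h.two_le_card _ h_mem
    · exact Finset.singleton_ne_empty x h_eq.symm
  cover i := by
    constructor
    · intro hi
      by_cases h_cov : ∃ β ∈ S, i ∈ β
      · obtain ⟨β, hβ, hiβ⟩ := h_cov
        exact ⟨β, mem_addSingletons.2 (.inl hβ), hiβ⟩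
      · push Not at h_cov
        exact ⟨{i}, mem_addSingletons.2 (.inr ⟨i, hi, h_cov, rfl⟩), Finset.mem_singleton_self i⟩
    · rintro ⟨β, hβ, hi⟩
      rcases mem_addSingletons.1 hβ with hβ | ⟨x, hx, _, rfl⟩
      · exact h.subset_Icc β hβ hi
      · rwa [Finset.mem_singleton.1 hi]
  disjoint β hβ γ hγ hne := by
    rcases mem_addSingletons.1 hβ with hβ | ⟨x, _, hx, rfl⟩ <;>
    rcases mem_addSingletons.1 hγ with hγ | ⟨y, _, hy, rfl⟩
    · exact h.disjoint β hβ γ hγ hne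
    · exact Finset.disjoint_singleton_right.2 (hy β hβ)
    · exact Finset.disjoint_singleton_left.2 (hx γ hγ)
    · exact Finset.disjoint_singleton.2 fun hxy => hne (by rw [hxy])

end IsNsFamily

/-- Noncrossing partitions with `n - k + 1` blocks correspond to their families of non-singleton
blocks. -/
def ncEquivNsFamily (hk : 1 ≤ k) (hkn : k ≤ n) :
    NC n k ≃ {S : Finset (Finset ℕ) //
      IsNsFamily n S ∧ IsNoncrossing S ∧ ∑ β ∈ S, (β.card - 1) = k - 1} where
  toFun π := ⟨nsBlocks π.val.blocks, π.val.isNsFamily_nsBlocks,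
    π.prop.1.mono (Finset.filter_subset _ _), by
      have h_sum := π.val.sum_nsBlocks_card_sub_one_add_card_blocks
      rw [π.prop.2] at h_sum
      omega⟩
  invFun S := ⟨S.prop.1.toSetPartition, S.prop.2.1.addSingletons, by
    have h_sum := S.prop.1.toSetPartition.sum_nsBlocks_card_sub_one_add_card_blocks
    have h_ns : nsBlocks S.prop.1.toSetPartition.blocks = S := S.prop.1.nsBlocks_addSingletons
    have h_rank := S.prop.2.2
    rw [h_ns] at h_sum
    omega⟩
  left_inv π := Subtype.ext (SetPartition.blocks_injective π.val.addSingletons_nsBlocks)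
  right_inv S := Subtype.ext S.prop.1.nsBlocks_addSingletons

end NonsingletonBlocks

section BlockStatistics

variable {a b c d : ℕ}

theorem pair_ne_pair_of_lt (hac : a < c) (hcd : c < d) : ({a, b} : Finset ℕ) ≠ {c, d} := by
  have ha : a ∉ ({c, d} : Finset ℕ) := by simp [hac.ne, (hac.trans hcd).ne]
  exact fun h => ha (h ▸ Finset.mem_insert_self a {b})

theorem skip_triple (hab : a < b) (hbc : b < c) : skip {{a, b, c}} = c - a - 2 := by
  have h_min : fmin {a, b, c} = a := fmin_insert_of_le (by simp [hab.le, (hab.trans hbc).le])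
  have h_max : fmax {a, b, c} = c := by
    rw [fmax_insert, fmax_pair hbc.le, max_eq_right (hab.trans hbc).le]
  rw [skip, Finset.sum_singleton, h_min, h_max, card_triple hab hbc]
  omega

theorem skip_pair_pair (hab : a < b) (hcd : c < d) (hac : a < c) :
    skip {{a, b}, {c, d}} = (b - a - 1) + (d - c - 1) := by
  rw [skip, Finset.sum_pair (pair_ne_pair_of_lt hac hcd), fmin_pair hab.le, fmax_pair hab.le,
    fmin_pair hcd.le, fmax_pair hcd.le, Finset.card_pair hab.ne, Finset.card_pair hcd.ne]
  omega

theorem blockQuad_triple (hab : a < b) (hbc : b < c) : blockQuad {{a, b, c}} = (a, b, b, c) := by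
  have h_min : fmin {a, b, c} = a := fmin_insert_of_le (by simp [hab.le, (hab.trans hbc).le])
  have h_ns : nsBlocks {{a, b, c}} = {{a, b, c}} :=
    nsBlocks_eq_self (by simp [card_triple hab hbc])
  simp [blockQuad, h_ns, blockContaining, Finset.filter_singleton, h_min, sort_triple hab hbc]

theorem blockQuad_pair_pair (hab : a < b) (hcd : c < d) (hac : a < c) :
    blockQuad {{a, b}, {c, d}} = (a, b, c, d) := by
  have h_ne : ({a, b} : Finset ℕ) ≠ {c, d} := pair_ne_pair_of_lt hac hcd
  have h_ns : nsBlocks {{a, b}, {c, d}} = {{a, b}, {c, d}} :=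
    nsBlocks_eq_self (by simp [Finset.card_pair hab.ne, Finset.card_pair hcd.ne])
  have h_min : fmin (({{a, b}, {c, d}} : Finset (Finset ℕ)).sup id) = a := by
    rw [Finset.sup_insert, Finset.sup_singleton, id, id, Finset.sup_eq_union, Finset.insert_union]
    refine fmin_insert_of_le fun x hx => ?_
    simp only [Finset.mem_insert, Finset.mem_union, Finset.mem_singleton] at hx
    omega
  have h_first : blockContaining {{a, b}, {c, d}} a = {a, b} := by
    simp [blockContaining, Finset.filter_insert, Finset.filter_singleton, hac.ne,
      (hac.trans hcd).ne]
  have h_erase : ({{a, b}, {c, d}} : Finset (Finset ℕ)).erase {a, b} = {{c, d}} :=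
    Finset.erase_insert (by simpa using h_ne)
  simp only [blockQuad, h_ns, h_min, h_first, h_erase, Finset.card_pair h_ne, Finset.sup_singleton,
    id, fmin_pair hab.le, fmax_pair hab.le, fmin_pair hcd.le, fmax_pair hcd.le]
  rfl

theorem leap_triple (hab : a < b) (hbc : b < c) : leap {{a, b, c}} = b - 2 := by
  simp [leap, blockQuad_triple hab hbc]

theorem leap_pair_pair (hab : a < b) (hcd : c < d) (hac : a < c) :
    leap {{a, b}, {c, d}} = (c - 2) + (c - b) := by
  rw [leap, blockQuad_pair_pair hab hcd hac]

end BlockStatistics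

/-- The noncrossing patterns formed by the non-singleton blocks of an element of `NC n 3`, with
their elements listed in increasing order: a triple `{x, y, m}`, two disjoint pairs `xy|zm`, or two
nested pairs `xm|yz`. -/
inductive Pattern (n : ℕ) : Type
  | triple (x y m : ℕ) (hx : 1 ≤ x) (hxy : x < y) (hym : y < m) (hm : m ≤ n)
  | disjoint (x y z m : ℕ) (hx : 1 ≤ x) (hxy : x < y) (hyz : y < z) (hzm : z < m) (hm : m ≤ n)
  | nested (x y z m : ℕ) (hx : 1 ≤ x) (hxy : x < y) (hyz : y < z) (hzm : z < m) (hm : m ≤ n)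

namespace Pattern

variable {n : ℕ}

/-- The non-singleton blocks described by a pattern. -/
def blocks : Pattern n → Finset (Finset ℕ)
  | triple x y m .. => {{x, y, m}}
  | disjoint x y z m .. => {{x, y}, {z, m}}
  | nested x y z m .. => {{x, m}, {y, z}}

theorem blocks_injective : Function.Injective (blocks : Pattern n → Finset (Finset ℕ)) := by
  intro p q h
  have h_quad := congrArg blockQuad h
  cases p <;> cases q <;> simp only [blocks] at h_quad <;>
    grind [blockQuad_triple, blockQuad_pair_pair]

theorem isNsFamily_blocks (p : Pattern n) : IsNsFamily n p.blocks := by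
  cases p with
  | triple x y m hx hxy hym hm =>
    exact .singleton (by rw [card_triple hxy hym]; omega) (by grind)
  | disjoint x y z m hx hxy hyz hzm hm =>
    exact .pair hxy.ne hzm.ne (by grind) (by grind) (disjoint_pair_pair_iff.2 (by omega))
  | nested x y z m hx hxy hyz hzm hm =>
    exact .pair (by omega) hyz.ne (by grind) (by grind) (disjoint_pair_pair_iff.2 (by omega))

theorem isNoncrossing_blocks (p : Pattern n) : IsNoncrossing p.blocks := by
  intro a b c d hab hbc hcd β hβ γ hγ ha hc hb hd
  cases p <;> simp only [blocks, Finset.mem_insert, Finset.mem_singleton] at hβ hγ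
  · rw [hβ, hγ]
  all_goals
    rcases hβ with rfl | rfl <;> rcases hγ with rfl | rfl <;>
    simp only [Finset.mem_insert, Finset.mem_singleton] at ha hb hc hd <;>
    first | rfl | omega

theorem sum_card_sub_one_blocks (p : Pattern n) : ∑ β ∈ p.blocks, (β.card - 1) = 2 := by
  cases p with
  | triple x y m hx hxy hym hm => simp [blocks, card_triple hxy hym]
  | disjoint x y z m hx hxy hyz hzm hm =>
    rw [blocks, Finset.sum_pair (pair_ne_pair_of_lt (by omega) hzm), Finset.card_pair hxy.ne,
      Finset.card_pair hzm.ne]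
  | nested x y z m hx hxy hyz hzm hm =>
    rw [blocks, Finset.sum_pair (pair_ne_pair_of_lt hxy hyz), Finset.card_pair (by omega),
      Finset.card_pair hyz.ne]

theorem exists_blocks_eq_pair_pair {a b c d : ℕ} (hab : a < b) (hcd : c < d) (hac : a < c)
    (hS : IsNsFamily n {{a, b}, {c, d}}) (hnc : IsNoncrossing {{a, b}, {c, d}}) :
    ∃ p : Pattern n, p.blocks = {{a, b}, {c, d}} := by
  have h_ne : ({a, b} : Finset ℕ) ≠ {c, d} := pair_ne_pair_of_lt hac hcd
  have ha := Finset.mem_Icc.1 (hS.subset_Icc {a, b} (by simp) (by simp : a ∈ _))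
  have hb := Finset.mem_Icc.1 (hS.subset_Icc {a, b} (by simp) (by simp : b ∈ _))
  have hd := Finset.mem_Icc.1 (hS.subset_Icc {c, d} (by simp) (by simp : d ∈ _))
  have h_disj : b ≠ c ∧ b ≠ d :=
    (disjoint_pair_pair_iff.1 (hS.disjoint {a, b} (by simp) {c, d} (by simp) h_ne)).2
  have h_not_crossing : ¬(c < b ∧ b < d) := fun ⟨hcb, hbd⟩ =>
    h_ne (hnc a c b d hac hcb hbd _ (by simp) _ (by simp) (by simp) (by simp) (by simp) (by simp))
  rcases lt_or_gt_of_ne h_disj.1 with hbc | hcb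
  · exact ⟨disjoint a b c d ha.1 hab hbc hcd hd.2, rfl⟩
  · exact ⟨nested a c d b ha.1 hac hcd (by omega) hb.2, rfl⟩

theorem exists_blocks_eq {S : Finset (Finset ℕ)} (hS : IsNsFamily n S) (hnc : IsNoncrossing S)
    (h_sum : ∑ β ∈ S, (β.card - 1) = 2) : ∃ p : Pattern n, p.blocks = S := by
  rcases eq_singleton_or_eq_pair_of_sum_card_sub_one_eq_two hS.two_le_card h_sum with
    ⟨β, hβ, rfl⟩ | ⟨β, γ, hβ, hγ, h_ne, rfl⟩
  · obtain ⟨x, y, m, hxy, hym, rfl⟩ := exists_lt_lt_of_card_eq_three hβ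
    have hx := Finset.mem_Icc.1 (hS.subset_Icc _ (by simp) (by simp : x ∈ {x, y, m}))
    have hm := Finset.mem_Icc.1 (hS.subset_Icc _ (by simp) (by simp : m ∈ {x, y, m}))
    exact ⟨triple x y m hx.1 hxy hym hm.2, rfl⟩
  · obtain ⟨a, b, hab, rfl⟩ := exists_lt_of_card_eq_two hβ
    obtain ⟨c, d, hcd, rfl⟩ := exists_lt_of_card_eq_two hγ
    have hac : a ≠ c :=
      (disjoint_pair_pair_iff.1 (hS.disjoint {a, b} (by simp) {c, d} (by simp) h_ne)).1.1
    rcases lt_or_gt_of_ne hac with hac | hca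
    · exact exists_blocks_eq_pair_pair hab hcd hac hS hnc
    · rw [Finset.pair_comm] at hS hnc ⊢
      exact exists_blocks_eq_pair_pair hcd hab hca hS hnc

/-- A pattern is the same as the family of non-singleton blocks it describes. -/
noncomputable def equivNsFamily : Pattern n ≃ {S : Finset (Finset ℕ) //
    IsNsFamily n S ∧ IsNoncrossing S ∧ ∑ β ∈ S, (β.card - 1) = 2} :=
  Equiv.ofBijective
    (fun p => ⟨p.blocks, p.isNsFamily_blocks, p.isNoncrossing_blocks, p.sum_card_sub_one_blocks⟩)
    ⟨fun _ _ h => blocks_injective (congrArg Subtype.val h), fun ⟨_, hS, hnc, h_sum⟩ =>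
      (exists_blocks_eq hS hnc h_sum).imp fun _ h => Subtype.ext h⟩

/-- Patterns in `{1, …, n}` correspond to the elements of `NC n 3`. -/
noncomputable def equivNC (hn : 3 ≤ n) : Pattern n ≃ NC n 3 :=
  equivNsFamily.trans (ncEquivNsFamily (by omega) hn).symm

theorem nsBlocks_equivNC (hn : 3 ≤ n) (p : Pattern n) :
    nsBlocks (equivNC hn p).val.blocks = p.blocks :=
  p.isNsFamily_blocks.nsBlocks_addSingletons

theorem skip_equivNC (hn : 3 ≤ n) (p : Pattern n) :
    skip (equivNC hn p).val.blocks = skip p.blocks := by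
  rw [← SetPartition.skip_nsBlocks, nsBlocks_equivNC]

theorem leap_equivNC (hn : 3 ≤ n) (p : Pattern n) :
    leap (equivNC hn p).val.blocks = leap p.blocks := by
  rw [← leap_nsBlocks, nsBlocks_equivNC]

/-- The involution exchanging `skip` and `leap`: it keeps the largest element `m`, shifts the other
elements by `m - x - z`, where `x` and `z` are the first and the last of them, and exchanges the
disjoint and nested patterns. -/
def swap : Pattern n → Pattern n
  | triple x y m _ _ _ _ =>
    triple (m - y) (m - x) m (by omega) (by omega) (by omega) (by omega)
  | disjoint x y z m _ _ _ _ _ =>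
    nested (m - z) (y + m - x - z) (m - x) m (by omega) (by omega) (by omega) (by omega) (by omega)
  | nested x y z m _ _ _ _ _ =>
    disjoint (m - z) (y + m - x - z) (m - x) m (by omega) (by omega) (by omega) (by omega)
      (by omega)

theorem swap_involutive : Function.Involutive (swap : Pattern n → Pattern n) := by
  rintro (_ | _ | _) <;> simp only [swap, triple.injEq, disjoint.injEq, nested.injEq,
    and_true] <;> omega

theorem skip_blocks_swap (p : Pattern n) : skip p.swap.blocks = leap p.blocks := by
  cases p with
  | triple x y m hx hxy hym hm =>
    rw [swap, blocks, blocks, skip_triple (by omega) (by omega), leap_triple hxy hym]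
    omega
  | disjoint x y z m hx hxy hyz hzm hm =>
    rw [swap, blocks, blocks, skip_pair_pair (by omega) (by omega) (by omega),
      leap_pair_pair hxy hzm (by omega)]
    omega
  | nested x y z m hx hxy hyz hzm hm =>
    rw [swap, blocks, blocks, skip_pair_pair (by omega) (by omega) (by omega),
      leap_pair_pair (by omega) hyz hxy]
    omega

theorem leap_blocks_swap (p : Pattern n) : leap p.swap.blocks = skip p.blocks := by
  rw [← skip_blocks_swap, swap_involutive]

end Pattern

/-- Combinatorial symmetry `N_{n,3}(q,t) = N_{n,3}(t,q)` via the pair (skip, leap):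
for all `n ≥ 3` and `u v`, the number of `π ∈ NC(n,3)` with `skip π = u` and
`leap π = v` equals the number with `skip π = v` and `leap π = u`. -/
theorem skip_leap_symmetry (n u v : ℕ) (hn : 3 ≤ n) :
    Nat.card {π : NC n 3 // skip π.val.blocks = u ∧ leap π.val.blocks = v} =
    Nat.card {π : NC n 3 // skip π.val.blocks = v ∧ leap π.val.blocks = u} := by
  let e : Pattern n ≃ NC n 3 := Pattern.equivNC hn
  let involution : NC n 3 ≃ NC n 3 := e.permCongr Pattern.swap_involutive.toPerm
  refine Nat.card_congr (involution.subtypeEquiv fun π => ?_)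
  obtain ⟨p, rfl⟩ := e.surjective π
  have h_involution : involution (e p) = e p.swap := by simp [involution]
  rw [h_involution, Pattern.skip_equivNC, Pattern.leap_equivNC, Pattern.skip_equivNC,
    Pattern.leap_equivNC, Pattern.skip_blocks_swap, Pattern.leap_blocks_swap, and_comm]

end QtN
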